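/- arXiv:0908.2299 — 4 statements merged into one kernel-verified Lean document; each statement's English description precedes it below -/
import Mathlib

section
/- Let $k$ be a field of characteristic zero, $d \ge 0$, $B = k[x_1,\dots,x_d]$, and let $k$ be the augmentation $B$-module. Then for every $n \ge 0$ the $k$-vector space $\mathrm{Ext}^n_B(k,k)$ is finite dimensional of dimension $\binom{d}{n}$; in particular $\mathrm{Ext}^n_B(k,k) = 0$ for all $n > d$. -/
/-! If `r` is regular on `M` and kills `N`, then `r` acts as zero on `Ext(M, N)`, so the long exact
sequence of `0 → M → M → M/rM → 0` breaks up into short exact sequences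
`0 → Extⁿ⁻¹(M, N) → Extⁿ(M/rM, N) → Extⁿ(M, N) → 0`: passing from `M` to `M/rM` multiplies the
Poincaré series of `Ext(M, N)` by `1 + t`. Since `x₁, …, x_d` is a regular sequence on `B` with
quotient `k`, and `Ext(B, k) = Hom(B, k) = k` has series `1`, that of `Ext(k, k)` is `(1 + t)^d`. -/

open CategoryTheory

noncomputable section

variable (k : Type) [Field k] [CharZero k] (d : ℕ)

/-- The augmentation module structure on `k` over the polynomial ring `k[x₁,…,x_d]`:
every variable `xᵢ` acts by `0`, i.e. a polynomial acts by multiplication by its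
constant coefficient. -/
instance augmentationModule : Module (MvPolynomial (Fin d) k) k :=
  (MvPolynomial.constantCoeff : MvPolynomial (Fin d) k →+* k).toModule

/-- The augmentation module `k` as an object of the category of modules over the
polynomial ring `B = k[x₁,…,x_d]`. -/
def KMod : ModuleCat (MvPolynomial (Fin d) k) :=
  ModuleCat.of (MvPolynomial (Fin d) k) k

universe t w v u

section DerivedFunctorExt

variable {R : Type t} [Ring R] {C : Type u} [Category.{v} C] [Abelian C] [Linear R C]
  [HasExt.{w} C] {X Y : C}

theorem extMk_eq_zero_iff_eq_zero (P : ProjectiveResolution X) (f : P.complex.X 0 ⟶ Y) (m : ℕ)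
    (hm : 0 + 1 = m) (hf : P.complex.d m 0 ≫ f = 0) : P.extMk f m hm hf = 0 ↔ f = 0 := by
  refine ⟨fun h => ?_, fun h => by subst h; exact P.extMk_zero m hm⟩
  rw [← P.extEquivCohomologyClass.apply_eq_iff_eq, P.extEquivCohomologyClass_extMk,
    P.extEquivCohomologyClass_zero, CochainComplex.HomComplex.CohomologyClass.mk_eq_zero_iff,
    CochainComplex.HomComplex.Cocycle.toSingleMk_mem_coboundaries_iff _ _ _ _ _ 1 (by simp)] at h
  obtain ⟨g, hg⟩ := h
  have hg_zero : g = 0 := (CochainComplex.isZero_of_isStrictlyLE _ 0 1 (by lia)).eq_of_src g 0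
  rw [← cancel_epi (P.cochainComplexXIso (-(0 : ℕ)) 0 rfl).hom, ← hg, hg_zero,
    Limits.comp_zero, Limits.comp_zero]

theorem extMk_eq_zero_iff_exists_d_comp (P : ProjectiveResolution X) {n : ℕ}
    (f : P.complex.X n ⟶ Y) (m : ℕ) (hm : n + 1 = m) (hf : P.complex.d m n ≫ f = 0) :
    P.extMk f m hm hf = 0 ↔
      ∃ g : P.complex.X ((ComplexShape.up ℕ).prev n) ⟶ Y, P.complex.d n _ ≫ g = f := by
  cases n with
  | zero =>
    -- `(ComplexShape.up ℕ).prev 0` is the junk value `0`, where there is no differential.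
    have hd : P.complex.d 0 ((ComplexShape.up ℕ).prev 0) = 0 :=
      P.complex.shape _ _ (Nat.succ_ne_zero _)
    rw [extMk_eq_zero_iff_eq_zero, hd]
    simp only [Limits.zero_comp, exists_const, eq_comm]
  | succ n => exact P.extMk_eq_zero_iff f m hm hf _ (by simp)

theorem smul_extMk (P : ProjectiveResolution X) {n : ℕ} (f : P.complex.X n ⟶ Y) (m : ℕ)
    (hm : n + 1 = m) (hf : P.complex.d m n ≫ f = 0) (r : R) :
    r • P.extMk f m hm hf = P.extMk (r • f) m hm (by simp [hf]) := by
  simp only [Abelian.Ext.smul_eq_comp_mk₀, P.extMk_comp_mk₀, Linear.comp_smul, Category.comp_id]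

variable (R Y) in
/-- The class in `Ext X Y n` of a cocycle of degree `n` in `Hom(P, Y)`, where `P` is a projective
resolution of `X`. -/
def cocycleToExt (P : ProjectiveResolution X) (n : ℕ) :
    LinearMap.ker ((P.complex.linearYonedaObj R Y).sc n).g.hom →ₗ[R] Abelian.Ext X Y n where
  toFun f := P.extMk (Y := Y) f.1 ((ComplexShape.up ℕ).next n) (by simp) f.2
  map_add' _ _ := (P.add_extMk _ _ _ _ _ _).symm
  map_smul' _ _ := (smul_extMk P _ _ _ _ _).symm

theorem cocycleToExt_surjective (P : ProjectiveResolution X) (n : ℕ) :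
    Function.Surjective (cocycleToExt R Y P n) := fun α =>
  have ⟨f, hf, hα⟩ := P.extMk_surjective α ((ComplexShape.up ℕ).next n) (by simp)
  ⟨⟨f, hf⟩, hα⟩

theorem ker_cocycleToExt (P : ProjectiveResolution X) (n : ℕ) :
    LinearMap.ker (cocycleToExt R Y P n) =
      LinearMap.range ((P.complex.linearYonedaObj R Y).sc n).moduleCatToCycles := by
  ext f
  refine (extMk_eq_zero_iff_exists_d_comp P f.1 _ (by simp) f.2).trans ?_
  exact exists_congr fun _ => ⟨fun h => Subtype.ext h, fun h => congrArg Subtype.val h⟩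

variable (R Y) in
/-- The left derived functor of `Hom(-, Y)` computes the `Ext` defined by morphisms in the derived
category, for which long exact sequences are available. -/
def extLinearEquiv [EnoughProjectives C] (P : ProjectiveResolution X) (n : ℕ) :
    ((Ext R C n).obj (Opposite.op X)).obj Y ≃ₗ[R] Abelian.Ext X Y n :=
  (P.isoExt n Y).toLinearEquiv ≪≫ₗ
    ((P.complex.linearYonedaObj R Y).sc n).moduleCatHomologyIso.toLinearEquiv ≪≫ₗ
    Submodule.quotEquivOfEq _ _ (ker_cocycleToExt P n).symm ≪≫ₗ
    (cocycleToExt R Y P n).quotKerEquivOfSurjective (cocycleToExt_surjective P n)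

end DerivedFunctorExt

section PoincareSeries

variable {K : Type t} [Field K]

variable (K) in
/-- The Poincaré series `∑ dim_K Ext^n(X, Y) tⁿ`, with cardinal coefficients so that no
finiteness has to be assumed. -/
def extSeries {C : Type u} [Category.{v} C] [Abelian C] [Linear K C] [HasExt.{w} C]
    (X Y : C) : PowerSeries Cardinal.{w} :=
  PowerSeries.mk fun n => Module.rank K (Abelian.Ext X Y n)

section Abelian

variable {C : Type u} [Category.{v} C] [Abelian C] [Linear K C] [HasExt.{w} C]

theorem extSeries_congr_left {X X' : C} (e : X ≅ X') (Y : C) :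
    extSeries K X Y = extSeries K X' Y := by
  ext n
  simp only [extSeries, PowerSeries.coeff_mk]
  exact (LinearEquiv.ofLinearMap
    ((Abelian.Ext.mk₀ e.inv).precompOfLinear K Y (zero_add n))
    ((Abelian.Ext.mk₀ e.hom).precompOfLinear K Y (zero_add n))
    (by ext x; simp) (by ext x; simp)).rank_eq

theorem extSeries_of_shortExact {S : ShortComplex C} (hS : S.ShortExact) {Y : C}
    (hf : ∀ (n : ℕ) (x : Abelian.Ext S.X₂ Y n),
      (Abelian.Ext.mk₀ S.f).comp x (zero_add n) = 0) :
    extSeries K S.X₃ Y = extSeries K S.X₂ Y + PowerSeries.X * extSeries K S.X₁ Y := by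
  have hg_surj (n : ℕ) : Function.Surjective
      ((Abelian.Ext.mk₀ S.g).precompOfLinear K Y (zero_add n)) := fun x =>
    Abelian.Ext.contravariant_sequence_exact₂ hS Y x (hf n x)
  ext n
  cases n with
  | zero =>
    have := hS.epi_g
    have hg_inj := Abelian.Ext.precomp_mk₀_injective_of_epi Y S.g
    rw [map_add, PowerSeries.coeff_zero_X_mul, add_zero]
    simp only [extSeries, PowerSeries.coeff_mk]
    exact (LinearEquiv.ofBijective
      ((Abelian.Ext.mk₀ S.g).precompOfLinear K Y (zero_add 0)) ⟨hg_inj, hg_surj 0⟩).rank_eq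
  | succ n =>
    let δ := hS.extClass.precompOfLinear K Y (add_comm 1 n)
    let g := (Abelian.Ext.mk₀ S.g).precompOfLinear K Y (zero_add (n + 1))
    have hδ_inj : Function.Injective δ := by
      refine (injective_iff_map_eq_zero δ).2 fun x hx => ?_
      obtain ⟨y, rfl⟩ := Abelian.Ext.contravariant_sequence_exact₁ hS Y x (add_comm 1 n) hx
      exact hf n y
    have hker : LinearMap.ker g = LinearMap.range δ := by
      refine le_antisymm
        (fun x hx => Abelian.Ext.contravariant_sequence_exact₃ hS Y x hx (add_comm 1 n)) ?_
      rintro _ ⟨y, rfl⟩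
      simp [g, δ]
    rw [map_add, PowerSeries.coeff_succ_X_mul]
    simp only [extSeries, PowerSeries.coeff_mk]
    rw [LinearMap.rank_eq_of_surjective (hg_surj (n + 1)), hker,
      rank_range_of_injective δ hδ_inj]

theorem extSeries_of_projective (X Y : C) [Projective X] :
    extSeries K X Y = PowerSeries.C (Module.rank K (Abelian.Ext X Y 0)) := by
  ext n
  rw [PowerSeries.coeff_C, extSeries, PowerSeries.coeff_mk]
  split_ifs with hn
  · rw [hn]
  · obtain ⟨m, rfl⟩ := Nat.exists_eq_succ_of_ne_zero hn
    have := Abelian.Ext.subsingleton_of_projective X Y m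
    exact rank_subsingleton' K _

end Abelian

section RegularSequence

theorem mk₀_smul_id_comp_eq_zero {R : Type t} [Ring R] {C : Type u} [Category.{v} C] [Abelian C]
    [Linear R C] [HasExt.{w} C] {X Y : C} {r : R} (hr : r • 𝟙 Y = 0) {n : ℕ}
    (x : Abelian.Ext X Y n) :
    (Abelian.Ext.mk₀ (r • 𝟙 X)).comp x (zero_add n) = 0 := by
  rw [Abelian.Ext.mk₀_smul, Abelian.Ext.smul_comp, Abelian.Ext.mk₀_id_comp,
    Abelian.Ext.smul_eq_comp_mk₀, hr, Abelian.Ext.mk₀_zero, Abelian.Ext.comp_zero]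

variable {R : Type u} [CommRing R] [Algebra K R] [HasExt.{w} (ModuleCat.{v} R)]

theorem extSeries_quotSMulTop {M : ModuleCat.{v} R} (N : ModuleCat.{v} R) {r : R}
    (hM : IsSMulRegular M r) (hN : r ∈ Module.annihilator R N) :
    extSeries K (ModuleCat.of R (QuotSMulTop r M)) N =
      (1 + PowerSeries.X) * extSeries K M N := by
  rw [add_mul, one_mul]
  have hN_smul : r • 𝟙 N = 0 := ModuleCat.hom_ext (LinearMap.ext (Module.mem_annihilator.1 hN))
  exact extSeries_of_shortExact hM.smulShortComplex_shortExact fun _ =>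
    mk₀_smul_id_comp_eq_zero hN_smul

open RingTheory.Sequence in
theorem extSeries_quotient_ofList_smul_top (M N : ModuleCat.{v} R) {rs : List R}
    (hM : IsWeaklyRegular M rs) (hN : ∀ r ∈ rs, r ∈ Module.annihilator R N) :
    extSeries K (ModuleCat.of R (M ⧸ (Ideal.ofList rs • ⊤ : Submodule R M))) N =
      (1 + PowerSeries.X) ^ rs.length * extSeries K M N := by
  induction rs generalizing M with
  | nil =>
    rw [List.length_nil, pow_zero, one_mul]
    refine extSeries_congr_left (Submodule.quotEquivOfEqBot _ ?_).toModuleIso N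
    rw [Ideal.ofList_nil, Submodule.bot_smul]
  | cons r rs ih =>
    obtain ⟨hr, hrs⟩ := (isWeaklyRegular_cons_iff M r rs).1 hM
    obtain ⟨hNr, hNrs⟩ := List.forall_mem_cons.1 hN
    calc extSeries K (ModuleCat.of R (M ⧸ (Ideal.ofList (r :: rs) • ⊤ : Submodule R M))) N
      _ = extSeries K (ModuleCat.of R
            (QuotSMulTop r M ⧸ (Ideal.ofList rs • ⊤ : Submodule R (QuotSMulTop r M)))) N :=
        extSeries_congr_left
          (Submodule.quotOfListConsSMulTopEquivQuotSMulTopInner M r rs).toModuleIso N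
      _ = (1 + PowerSeries.X) ^ rs.length * ((1 + PowerSeries.X) * extSeries K M N) := by
        rw [← extSeries_quotSMulTop N hr hNr]
        exact ih (ModuleCat.of R (QuotSMulTop r M)) hrs hNrs
      _ = (1 + PowerSeries.X) ^ (r :: rs).length * extSeries K M N := by
        rw [List.length_cons, pow_succ, mul_assoc]

end RegularSequence

open scoped ModuleCat in
theorem extSeries_self {R : Type u} [Ring R] [Algebra K R] (N : ModuleCat.{u} R) :
    extSeries K (ModuleCat.of R R) N = PowerSeries.C (Module.rank K N) := by
  have : Projective (ModuleCat.of R R) :=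
    ModuleCat.projective_of_free (Module.Basis.singleton Unit R)
  rw [extSeries_of_projective]
  congr 1
  exact (Abelian.Ext.linearEquiv₀ ≪≫ₗ ModuleCat.homLinearEquiv ≪≫ₗ
    LinearMap.ringLmapEquivSelf R K N).rank_eq

end PoincareSeries

section Variables

open MvPolynomial

variable {σ R : Type*}

theorem isSMulRegular_X_quotient_span_X_image [CommRing R] {s : Set σ} {j : σ} (hj : j ∉ s) :
    IsSMulRegular (MvPolynomial σ R ⧸ Ideal.span (X '' s : Set (MvPolynomial σ R)))
      (X j : MvPolynomial σ R) := by
  refine (isSMulRegular_quotient_iff_mem_of_smul_mem _ _).2 fun p hp => ?_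
  rw [smul_eq_mul, mem_ideal_span_X_image] at hp
  refine mem_ideal_span_X_image.2 fun m hm => ?_
  have hjm : Finsupp.single j 1 + m ∈ (X j * p).support := by
    rwa [mem_support_iff, coeff_X_mul, ← mem_support_iff]
  obtain ⟨i, his, hi⟩ := hp _ hjm
  have hji : j ≠ i := fun h => hj (h ▸ his)
  exact ⟨i, his, by rwa [Finsupp.add_apply, Finsupp.single_eq_of_ne' hji, zero_add] at hi⟩

theorem ofList_map_X_smul_top [CommSemiring R] (l : List σ) :
    (Ideal.ofList (l.map X : List (MvPolynomial σ R)) • ⊤ : Ideal (MvPolynomial σ R)) =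
      Ideal.span (X '' {i | i ∈ l}) := by
  rw [smul_eq_mul, Ideal.mul_top, Ideal.ofList]
  simp only [List.mem_map]
  rfl

theorem isWeaklyRegular_map_X [CommRing R] {l : List σ} (hl : l.Nodup) :
    RingTheory.Sequence.IsWeaklyRegular (MvPolynomial σ R)
      (l.map X : List (MvPolynomial σ R)) where
  regular_mod_prev i hi := by
    rw [← List.map_take, ofList_map_X_smul_top, List.getElem_map]
    refine isSMulRegular_X_quotient_span_X_image fun h => ?_
    obtain ⟨j, hj, hji⟩ := List.mem_take_iff_getElem.1 h
    have : j = i := hl.getElem_inj_iff.1 hji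
    omega

theorem ker_constantCoeff [CommSemiring R] :
    RingHom.ker (constantCoeff : MvPolynomial σ R →+* R) = idealOfVars σ R := by
  ext p
  rw [← pow_one (idealOfVars σ R), mem_pow_idealOfVars_iff']
  simp [constantCoeff_eq, Finsupp.degree_eq_zero_iff]

end Variables

section Augmentation

variable (K : Type) [Field K] (m : ℕ)

/-- The augmentation `K[x₁,…,x_m] → K` as a linear map over the polynomial ring. -/
def augmentation : MvPolynomial (Fin m) K →ₗ[MvPolynomial (Fin m) K] KMod K m where
  toFun p := (MvPolynomial.constantCoeff p : K)
  map_add' := map_add (MvPolynomial.constantCoeff (R := K) (σ := Fin m))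
  map_smul' := map_mul (MvPolynomial.constantCoeff (R := K) (σ := Fin m))

theorem augmentation_surjective : Function.Surjective (augmentation K m) :=
  fun c => ⟨MvPolynomial.C c, MvPolynomial.constantCoeff_C (R := K) (Fin m) c⟩

theorem ker_augmentation :
    LinearMap.ker (augmentation K m) = MvPolynomial.idealOfVars (Fin m) K :=
  ker_constantCoeff (σ := Fin m) (R := K)

/-- `K[x₁,…,x_m] / (x₁,…,x_m) ≃ K`, with the ideal written as in the theory of regular
sequences. -/
def quotientVarsEquivKMod :
    (MvPolynomial (Fin m) K ⧸ (Ideal.ofList ((List.finRange m).map MvPolynomial.X :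
      List (MvPolynomial (Fin m) K)) • ⊤ : Ideal (MvPolynomial (Fin m) K)))
      ≃ₗ[MvPolynomial (Fin m) K] KMod K m :=
  Submodule.quotEquivOfEq _ _ (by
    rw [ofList_map_X_smul_top, ker_augmentation]
    simp [MvPolynomial.idealOfVars]) ≪≫ₗ
    (augmentation K m).quotKerEquivOfSurjective (augmentation_surjective K m)

open scoped ModuleCat in
theorem rank_KMod : Module.rank K (KMod K m) = 1 := by
  let e : KMod K m ≃ₗ[K] K :=
    { AddEquiv.refl K with
      map_smul' := fun c x =>
        congrArg (· * (show K from x)) (MvPolynomial.constantCoeff_C (Fin m) c) }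
  rw [e.rank_eq, Module.rank_self]

theorem X_mem_annihilator_KMod (i : Fin m) :
    (MvPolynomial.X i : MvPolynomial (Fin m) K) ∈ Module.annihilator _ (KMod K m) :=
  Module.mem_annihilator.2 fun x =>
    show MvPolynomial.constantCoeff (MvPolynomial.X i) * (show K from x) = 0 by
      rw [MvPolynomial.constantCoeff_X]; exact zero_mul _

theorem extSeries_KMod :
    extSeries K (KMod K m) (KMod K m) = (1 + PowerSeries.X) ^ m := by
  let vars : List (MvPolynomial (Fin m) K) := (List.finRange m).map MvPolynomial.X
  have hvars : ∀ p ∈ vars, p ∈ Module.annihilator (MvPolynomial (Fin m) K) (KMod K m) :=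
    List.forall_mem_map.2 fun i _ => X_mem_annihilator_KMod K m i
  calc extSeries K (KMod K m) (KMod K m)
    _ = extSeries K (ModuleCat.of _ (MvPolynomial (Fin m) K ⧸
          (Ideal.ofList vars • ⊤ : Ideal (MvPolynomial (Fin m) K)))) (KMod K m) :=
      (extSeries_congr_left (quotientVarsEquivKMod K m).toModuleIso _).symm
    _ = (1 + PowerSeries.X) ^ vars.length *
          extSeries K (ModuleCat.of _ (MvPolynomial (Fin m) K)) (KMod K m) :=
      extSeries_quotient_ofList_smul_top (ModuleCat.of _ (MvPolynomial (Fin m) K)) _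
        (isWeaklyRegular_map_X (List.nodup_finRange m)) hvars
    _ = (1 + PowerSeries.X) ^ m := by
      rw [extSeries_self, rank_KMod, map_one, mul_one, List.length_map, List.length_finRange]

end Augmentation

theorem coeff_one_add_X_pow {S : Type*} [CommSemiring S] (m n : ℕ) :
    PowerSeries.coeff n ((1 + PowerSeries.X) ^ m : PowerSeries S) = m.choose n := by
  rw [← Polynomial.coeff_one_add_X_pow, ← Polynomial.coeff_coe, Polynomial.coe_pow,
    Polynomial.coe_add, Polynomial.coe_one, Polynomial.coe_X]

theorem finrank_ext_polynomial_augmentation_general (K : Type) [Field K] (m n : ℕ) :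
    FiniteDimensional K (((Ext K (ModuleCat (MvPolynomial (Fin m) K)) n).obj
        (Opposite.op (KMod K m))).obj (KMod K m)) ∧
    Module.finrank K (((Ext K (ModuleCat (MvPolynomial (Fin m) K)) n).obj
        (Opposite.op (KMod K m))).obj (KMod K m)) = m.choose n ∧
    (m < n → Subsingleton (((Ext K (ModuleCat (MvPolynomial (Fin m) K)) n).obj
        (Opposite.op (KMod K m))).obj (KMod K m))) := by
  have hrank : Module.rank K (((Ext K (ModuleCat (MvPolynomial (Fin m) K)) n).obj
      (Opposite.op (KMod K m))).obj (KMod K m)) = m.choose n :=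
    calc
      _ = PowerSeries.coeff n (extSeries K (KMod K m) (KMod K m)) := by
        rw [(extLinearEquiv K (KMod K m) (ProjectiveResolution.of (KMod K m)) n).rank_eq,
          extSeries, PowerSeries.coeff_mk]
      _ = m.choose n := by rw [extSeries_KMod, coeff_one_add_X_pow]
  refine ⟨Module.finite_of_rank_eq_nat hrank, Module.finrank_eq_of_rank_eq hrank, fun hn => ?_⟩
  rw [← rank_zero_iff (R := K), hrank, Nat.choose_eq_zero_of_lt hn, Nat.cast_zero]

/-- `Ext^n_B(k, k)` for `B = k[x₁,…,x_d]` and `k` the augmentation module is a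
`k`-vector space of dimension `d.choose n`; in particular it vanishes for `n > d`. -/
theorem finrank_ext_polynomial_augmentation (n : ℕ) :
    FiniteDimensional k (((Ext k (ModuleCat (MvPolynomial (Fin d) k)) n).obj
        (Opposite.op (KMod k d))).obj (KMod k d)) ∧
    Module.finrank k (((Ext k (ModuleCat (MvPolynomial (Fin d) k)) n).obj
        (Opposite.op (KMod k d))).obj (KMod k d)) = d.choose n ∧
    (d < n → Subsingleton (((Ext k (ModuleCat (MvPolynomial (Fin d) k)) n).obj
        (Opposite.op (KMod k d))).obj (KMod k d))) :=
  finrank_ext_polynomial_augmentation_general k d n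

end
end

section
/- Let $k$ be a field of characteristic zero, $d \ge 1$, $A = \Lambda(k^d)$ the exterior algebra, and let $k$ be the augmentation left $A$-module. Then for every $n \ge 0$ the $k$-vector space $\mathrm{Ext}^n_A(k,k)$ is finite dimensional of dimension $\binom{n+d-1}{d-1}$; in particular $\mathrm{Ext}^n_A(k,k) \neq 0$ for every $n \ge 0$. -/
/-!
Let `Λ` be the exterior algebra over a commutative ring `R` on generators `eᵢ`, and let `Γⁿ` be
free on the divided monomials of degree `n` in dual variables `xᵢ`. The Cartan resolution
`⋯ → Λ ⊗ Γ² → Λ ⊗ Γ¹ → Λ ⊗ Γ⁰ → R` has differential `a ⊗ x^(α + i) ↦ a eᵢ ⊗ x^(α)`, summed over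
`i`. It is the tensor product over `i` of the resolutions `⋯ → R[e]/e² → R[e]/e² → R` in which all
maps are multiplication by `e`; each of these is contracted by `a ↦ a ⌊ e*`, so the tensor product
is contractible, in every characteristic. The differential has coefficients in the augmentation
ideal and hence vanishes after applying `Hom_Λ(-, R)`, so that `Extⁿ_Λ(R, R)` is free with one basis
element for each monomial of degree `n`.
-/

open CategoryTheory

noncomputable section

variable (k : Type) [Field k] [CharZero k] (d : ℕ)

/-- The augmentation module structure on `k` over the exterior algebra `Λ(k^d)`:
every element of `k^d` acts by `0`. -/
instance augmentationModuleExt : Module (ExteriorAlgebra k (Fin d → k)) k :=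
  ((ExteriorAlgebra.algebraMapInv :
      ExteriorAlgebra k (Fin d → k) →ₐ[k] k) : ExteriorAlgebra k (Fin d → k) →+* k).toModule

/-- The augmentation module `k` as an object of the category of modules over the
exterior algebra `A = Λ(k^d)`. -/
def KModE : ModuleCat (ExteriorAlgebra k (Fin d → k)) :=
  ModuleCat.of (ExteriorAlgebra k (Fin d → k)) k

namespace CartanResolution

universe u v

section ExteriorAlgebra

variable {R : Type u} [CommRing R] {ι : Type v}

local notation "Λ" => ExteriorAlgebra R (ι → R)

variable (R) in
/-- The generator `eᵢ` of the exterior algebra of the free module on `ι`. -/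
def gen [DecidableEq ι] (i : ι) : Λ := ExteriorAlgebra.ι R (Pi.single i 1)

/-- Right contraction `a ↦ a ⌊ eᵢ*` with the `i`-th dual basis vector. It is taken on the right so
that it interacts with right multiplication by the generators. -/
def contract (i : ι) : Λ →ₗ[R] Λ :=
  (CliffordAlgebra.contractRight (Q := (0 : QuadraticForm R (ι → R)))).flip (LinearMap.proj i)

open Classical in
/-- The algebra endomorphism which sends the generators indexed by `s` to `0` and fixes the
others. -/
def killGens (s : Set ι) : Λ →ₐ[R] Λ :=
  ExteriorAlgebra.map (LinearMap.pi fun i => if i ∈ s then 0 else LinearMap.proj i)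

@[elab_as_elim]
theorem right_induction {P : Λ → Prop} (algebraMap : ∀ r : R, P (algebraMap R Λ r))
    (add : ∀ a b, P a → P b → P (a + b))
    (mul_ι : ∀ v a, P a → P (a * ExteriorAlgebra.ι R v)) (a : Λ) : P a :=
  CliffordAlgebra.right_induction (Q := (0 : QuadraticForm R (ι → R))) algebraMap add mul_ι a

theorem contract_algebraMap (i : ι) (r : R) : contract i (algebraMap R Λ r) = 0 :=
  CliffordAlgebra.contractRight_algebraMap (0 : QuadraticForm R (ι → R)) (LinearMap.proj i) r

theorem contract_mul_ι (i : ι) (a : Λ) (v : ι → R) :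
    contract i (a * ExteriorAlgebra.ι R v) = v i • a - contract i a * ExteriorAlgebra.ι R v :=
  CliffordAlgebra.contractRight_mul_ι (Q := (0 : QuadraticForm R (ι → R)))
    (d := LinearMap.proj i) v a

theorem killGens_ι (s : Set ι) (v : ι → R) :
    killGens s (ExteriorAlgebra.ι R v) = ExteriorAlgebra.ι R (sᶜ.indicator v) := by
  rw [killGens, ExteriorAlgebra.map_apply_ι]
  congr 1
  ext i
  by_cases hi : i ∈ s <;> simp [hi]

theorem killGens_empty (a : Λ) : killGens ∅ a = a := by
  suffices killGens ∅ = AlgHom.id R Λ from DFunLike.congr_fun this a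
  ext v
  simp [killGens_ι]

theorem killGens_univ (a : Λ) :
    killGens Set.univ a = algebraMap R Λ (ExteriorAlgebra.algebraMapInv a) := by
  suffices killGens Set.univ = (Algebra.ofId R Λ).comp ExteriorAlgebra.algebraMapInv from
    DFunLike.congr_fun this a
  ext v
  simp [killGens_ι, ExteriorAlgebra.algebraMapInv, ← Pi.zero_def]

theorem killGens_killGens (s t : Set ι) (a : Λ) :
    killGens s (killGens t a) = killGens (s ∪ t) a := by
  suffices (killGens s).comp (killGens t) = killGens (R := R) (s ∪ t) from
    DFunLike.congr_fun this a
  ext v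
  simp [killGens_ι, Set.indicator_indicator, Set.compl_union]

variable [DecidableEq ι]

theorem gen_mul_self (i : ι) : gen R i * gen R i = 0 :=
  ExteriorAlgebra.ι_sq_zero _

theorem gen_mul_gen_add_swap (i j : ι) : gen R i * gen R j + gen R j * gen R i = 0 :=
  ExteriorAlgebra.ι_add_mul_swap _ _

theorem algebraMapInv_gen (i : ι) : ExteriorAlgebra.algebraMapInv (gen R i) = 0 := by
  simp [ExteriorAlgebra.algebraMapInv, gen]

theorem contract_mul_gen (i j : ι) (a : Λ) :
    contract i (a * gen R j) = (if i = j then a else 0) - contract i a * gen R j := by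
  rw [gen, contract_mul_ι, Pi.single_apply, ite_smul, one_smul, zero_smul]

theorem killGens_gen_of_mem {s : Set ι} {i : ι} (hi : i ∈ s) : killGens s (gen R i) = 0 := by
  have : Disjoint (Function.support (Pi.single i (1 : R))) sᶜ :=
    Set.disjoint_compl_right_iff_subset.2
      (Pi.support_single_subset.trans (Set.singleton_subset_iff.2 hi))
  rw [gen, killGens_ι, Set.indicator_eq_zero'.2 this, map_zero]

theorem killGens_gen_of_notMem {s : Set ι} {i : ι} (hi : i ∉ s) :
    killGens s (gen R i) = gen R i := by
  have : Function.support (Pi.single i (1 : R)) ⊆ sᶜ :=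
    Pi.support_single_subset.trans (Set.singleton_subset_iff.2 hi)
  rw [gen, killGens_ι, Set.indicator_eq_self.2 this]

theorem killGens_singleton_ι (i : ι) (v : ι → R) :
    killGens {i} (ExteriorAlgebra.ι R v) = ExteriorAlgebra.ι R v - v i • gen R i := by
  rw [killGens_ι, gen, ← map_smul, ← map_sub]
  congr 1
  ext j
  by_cases hj : j = i
  · simp [hj]
  · simp [hj]

theorem contract_mul_gen_eq_sub_killGens (i : ι) (a : Λ) :
    contract i a * gen R i = a - killGens {i} a := by
  induction a using right_induction with
  | algebraMap r => simp [contract_algebraMap]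
  | add a b ha hb => rw [map_add, add_mul, ha, hb, map_add]; abel
  | mul_ι v a ha =>
    have anticomm : ExteriorAlgebra.ι R v * gen R i = -(gen R i * ExteriorAlgebra.ι R v) :=
      eq_neg_of_add_eq_zero_left (ExteriorAlgebra.ι_add_mul_swap _ _)
    have kill_mul_gen : killGens {i} a * gen R i = a * gen R i := by
      have := congrArg (· * gen R i) ha
      rw [mul_assoc, gen_mul_self, mul_zero, sub_mul] at this
      exact (sub_eq_zero.1 this.symm).symm
    rw [contract_mul_ι, sub_mul, mul_assoc, anticomm, mul_neg, ← mul_assoc, ha, map_mul,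
      killGens_singleton_ι, mul_sub, mul_smul_comm, kill_mul_gen, smul_mul_assoc, sub_mul]
    abel

end ExteriorAlgebra

section Differential

variable {R : Type u} [CommRing R] {ι : Type v} [DecidableEq ι] [Fintype ι]

local notation "Λ" => ExteriorAlgebra R (ι → R)

variable (R ι) in
/-- The differential `Λ ⊗ Γⁿ⁺¹ → Λ ⊗ Γⁿ` of the Cartan resolution of the augmentation module, where
`Γⁿ` is the `n`-th divided power. An element of `Λ ⊗ Γⁿ` is encoded by its coordinates with respect
to the divided monomials of degree `n`, which are indexed by the multisets `Sym ι n`. -/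
def differential (n : ℕ) : (Sym ι (n + 1) → Λ) →ₗ[Λ] (Sym ι n → Λ) where
  toFun f β := ∑ i, f (i ::ₛ β) * gen R i
  map_add' f g := by
    ext β
    simp [add_mul, Finset.sum_add_distrib]
  map_smul' a f := by
    ext β
    simp [Finset.mul_sum, mul_assoc]

theorem differential_apply {n : ℕ} (f : Sym ι (n + 1) → Λ) (β : Sym ι n) :
    differential R ι n f β = ∑ i, f (i ::ₛ β) * gen R i :=
  rfl

theorem differential_differential (n : ℕ) (f : Sym ι (n + 2) → Λ) :
    differential R ι n (differential R ι (n + 1) f) = 0 := by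
  ext β
  simp only [differential_apply, Finset.sum_mul, mul_assoc, Pi.zero_apply,
    ← Fintype.sum_prod_type']
  refine Finset.sum_involution (fun p _ => p.swap) (fun p _ => ?_) (fun p _ hp heq => hp ?_)
    (fun p _ => Finset.mem_univ _) (fun p _ => p.swap_swap)
  · rw [Prod.fst_swap, Prod.snd_swap, Sym.cons_swap p.1 p.2, ← mul_add, gen_mul_gen_add_swap,
      mul_zero]
  · rw [show p.2 = p.1 from congrArg Prod.fst heq, gen_mul_self, mul_zero]

theorem algebraMapInv_differential {n : ℕ} (f : Sym ι (n + 1) → Λ) (β : Sym ι n) :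
    ExteriorAlgebra.algebraMapInv (differential R ι n f β) = 0 := by
  simp [differential_apply, algebraMapInv_gen]

end Differential

section Homotopy

variable {R : Type u} [CommRing R] {ι : Type v} [LinearOrder ι]

local notation "Λ" => ExteriorAlgebra R (ι → R)

theorem sum_contract_killGens_mul_gen {s : Finset ι} (hs : IsLowerSet (s : Set ι)) (a : Λ) :
    ∑ i ∈ s, contract i (killGens (Set.Iio i) a) * gen R i = a - killGens s a := by
  induction s using Finset.induction_on_max with
  | empty => simp [killGens_empty]
  | insert m s lt_m ih =>
    have notMem : m ∉ s := fun h => (lt_m m h).false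
    have lower : IsLowerSet (s : Set ι) := fun i j hji hi =>
      (Finset.mem_insert.1 (hs hji (Finset.mem_insert_of_mem hi))).resolve_left
        (hji.trans_lt (lt_m i hi)).ne
    have Iio_eq : Set.Iio m = s := Set.Subset.antisymm
      (fun i hi => (Finset.mem_insert.1 (hs hi.le (Finset.mem_insert_self m s))).resolve_left hi.ne)
      lt_m
    rw [Finset.sum_insert notMem, Iio_eq, ih lower, contract_mul_gen_eq_sub_killGens,
      killGens_killGens, Set.singleton_union, ← Finset.coe_insert, sub_add_sub_comm, add_comm,
      add_sub_add_right_eq_sub]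

/-- The least element of a nonempty multiset. -/
def least {n : ℕ} (α : Sym ι (n + 1)) : ι :=
  (α : Multiset ι).toFinset.min' <| by
    obtain ⟨i, hi⟩ := α.exists_mem
    exact ⟨i, Multiset.mem_toFinset.2 hi⟩

theorem least_mem {n : ℕ} (α : Sym ι (n + 1)) : least α ∈ α :=
  Multiset.mem_toFinset.1 (Finset.min'_mem _ _)

theorem least_le {n : ℕ} {α : Sym ι (n + 1)} {i : ι} (hi : i ∈ α) : least α ≤ i :=
  Finset.min'_le _ _ (Multiset.mem_toFinset.2 hi)

theorem least_cons {n : ℕ} {β : Sym ι n} {i : ι} (hi : ∀ j ∈ β, i ≤ j) : least (i ::ₛ β) = i := by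
  refine (least_le (Sym.mem_cons_self i β)).antisymm ?_
  rcases Sym.mem_cons.1 (least_mem (i ::ₛ β)) with h | h
  exacts [h.ge, hi _ h]

/-- The contracting homotopy of the Cartan resolution. It is the tensor product over `i : ι`, in
increasing order, of the homotopies `contract i` for one generator, `killGens` being the product of
the augmentations of the factors already passed. -/
def homotopy {n : ℕ} (f : Sym ι n → Λ) (α : Sym ι (n + 1)) : Λ :=
  contract (least α) (killGens (Set.Iio (least α)) (f (α.erase (least α) (least_mem α))))

theorem homotopy_cons {n : ℕ} (f : Sym ι n → Λ) {β : Sym ι n} {i : ι} (hi : ∀ j ∈ β, i ≤ j) :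
    homotopy f (i ::ₛ β) = contract i (killGens (Set.Iio i) (f β)) := by
  simp only [homotopy, least_cons hi, Sym.erase_cons_head]

variable [Fintype ι]

theorem differential_homotopy_zero (f : Sym ι 0 → Λ) (β : Sym ι 0) :
    differential R ι 0 (homotopy f) β =
      f β - algebraMap R Λ (ExteriorAlgebra.algebraMapInv (f β)) := by
  have β_le (i : ι) : ∀ j ∈ β, i ≤ j := by simp [Subsingleton.elim β .nil]
  rw [← killGens_univ, ← Finset.coe_univ,
    ← sum_contract_killGens_mul_gen (by simp [isLowerSet_univ]), differential_apply]
  exact Finset.sum_congr rfl fun i _ => by rw [homotopy_cons f (β_le i)]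

theorem sum_lt_homotopy_cons_mul_gen {n : ℕ} (f : Sym ι n → Λ) {α : Sym ι n} {m : ι}
    (hm : ∀ j ∈ α, m ≤ j) :
    ∑ i with i < m, homotopy f (i ::ₛ α) * gen R i = f α - killGens (Set.Iio m) (f α) := by
  have coe_eq : ((Finset.univ.filter (· < m) : Finset ι) : Set ι) = Set.Iio m := by
    ext
    simp
  rw [← coe_eq, ← sum_contract_killGens_mul_gen (coe_eq ▸ isLowerSet_Iio m)]
  refine Finset.sum_congr rfl fun i hi => ?_
  have him : i ≤ m := (Finset.mem_filter.1 hi).2.le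
  rw [homotopy_cons f fun j hj => him.trans (hm j hj)]

theorem contract_killGens_differential {n : ℕ} (f : Sym ι (n + 1) → Λ) (β : Sym ι n) (m : ι) :
    contract m (killGens (Set.Iio m) (differential R ι n f β)) =
      killGens (Set.Iio m) (f (m ::ₛ β)) -
        ∑ i with m ≤ i, contract m (killGens (Set.Iio m) (f (i ::ₛ β))) * gen R i := by
  have killed : killGens (Set.Iio m) (differential R ι n f β) =
      ∑ i with m ≤ i, killGens (Set.Iio m) (f (i ::ₛ β)) * gen R i := by
    rw [differential_apply, map_sum, Finset.sum_filter]
    refine Finset.sum_congr rfl fun i _ => ?_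
    rw [map_mul]
    split_ifs with hi
    · rw [killGens_gen_of_notMem (Set.notMem_Iio.2 hi)]
    · rw [killGens_gen_of_mem (Set.mem_Iio.2 (not_le.1 hi)), mul_zero]
  simp only [killed, map_sum, contract_mul_gen, Finset.sum_sub_distrib]
  rw [Finset.sum_ite_eq, if_pos (by simp)]

theorem differential_homotopy_add_homotopy_differential {n : ℕ} (f : Sym ι (n + 1) → Λ) :
    differential R ι (n + 1) (homotopy f) + homotopy (differential R ι n f) = f := by
  ext α
  obtain ⟨m, β, hm, rfl⟩ : ∃ m β, (∀ j ∈ β, m ≤ j) ∧ m ::ₛ β = α :=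
    ⟨least α, α.erase _ (least_mem α), fun j hj => least_le (Multiset.mem_of_mem_erase hj),
      Sym.cons_erase _⟩
  have below : ∑ i with i < m, homotopy f (i ::ₛ m ::ₛ β) * gen R i =
      f (m ::ₛ β) - killGens (Set.Iio m) (f (m ::ₛ β)) :=
    sum_lt_homotopy_cons_mul_gen f (by simpa using hm)
  have above : ∑ i with m ≤ i, homotopy f (i ::ₛ m ::ₛ β) * gen R i =
      ∑ i with m ≤ i, contract m (killGens (Set.Iio m) (f (i ::ₛ β))) * gen R i := by
    refine Finset.sum_congr rfl fun i hi => ?_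
    rw [Sym.cons_swap, homotopy_cons]
    simpa using ⟨(Finset.mem_filter.1 hi).2, hm⟩
  rw [Pi.add_apply, differential_apply, ← Finset.sum_filter_add_sum_filter_not _ (· < m)]
  simp only [not_lt]
  rw [below, above, homotopy_cons _ hm, contract_killGens_differential]
  abel

end Homotopy

section AugmentationModule

open scoped ModuleCat.Algebra

variable (R : Type u) [CommRing R]

/-- The augmentation module structure on `R` over the exterior algebra of an `R`-module `M`, on
which every element of `M` acts by `0`. -/
@[reducible]
def augmentationModule (M : Type v) [AddCommGroup M] [Module R M] :
    Module (ExteriorAlgebra R M) R :=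
  ((ExteriorAlgebra.algebraMapInv : ExteriorAlgebra R M →ₐ[R] R) :
    ExteriorAlgebra R M →+* R).toModule

attribute [local instance] augmentationModule

variable (ι : Type)

local notation "Λ" => ExteriorAlgebra R (ι → R)

/-- The augmentation module of the exterior algebra as an object of its module category. -/
def augmentationObj : ModuleCat.{u} Λ := ModuleCat.of Λ R

/-- The augmentation `Λ ⊗ Γ⁰ → R` of the Cartan resolution. -/
def augmentation : (Sym ι 0 → Λ) →ₗ[Λ] R where
  toFun f := ExteriorAlgebra.algebraMapInv (f .nil)
  map_add' _ _ := map_add _ _ _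
  map_smul' _ _ := map_mul _ _ _

theorem augmentation_surjective : Function.Surjective (augmentation R ι) := fun r =>
  ⟨fun _ => algebraMap R Λ r, ExteriorAlgebra.algebraMap_leftInverse _ r⟩

section Complex

variable [Fintype ι] [DecidableEq ι]

theorem augmentation_differential (f : Sym ι 1 → Λ) :
    augmentation R ι (differential R ι 0 f) = 0 :=
  algebraMapInv_differential f .nil

variable {R ι} in
theorem comp_differential_eq_zero {n : ℕ} (φ : (Sym ι n → Λ) →ₗ[Λ] R) :
    φ ∘ₗ differential R ι n = 0 := by
  refine LinearMap.ext fun f => ?_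
  rw [LinearMap.comp_apply, φ.pi_apply_eq_sum_univ]
  refine Finset.sum_eq_zero fun β _ => ?_
  change ExteriorAlgebra.algebraMapInv (differential R ι n f β) * _ = 0
  rw [algebraMapInv_differential, zero_mul]

/-- The chain complex `⋯ → Λ ⊗ Γ² → Λ ⊗ Γ¹ → Λ ⊗ Γ⁰` underlying the Cartan resolution. -/
def cartanComplex : ChainComplex (ModuleCat.{u} Λ) ℕ :=
  ChainComplex.of (fun n => ModuleCat.of Λ (Sym ι n → Λ))
    (fun n => ModuleCat.ofHom (differential R ι n))
    (fun n => ModuleCat.hom_ext (LinearMap.ext (differential_differential n)))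

theorem cartanComplex_d (n : ℕ) :
    (cartanComplex R ι).d (n + 1) n = ModuleCat.ofHom (differential R ι n) :=
  ChainComplex.of_d (fun n => ModuleCat.of Λ (Sym ι n → Λ))
    (fun n => ModuleCat.ofHom (differential R ι n)) n

/-- The augmentation as a morphism from the Cartan complex to the augmentation module in degree
`0`. -/
def cartanAugmentation : cartanComplex R ι ⟶ (ChainComplex.single₀ _).obj (augmentationObj R ι) :=
  (ChainComplex.toSingle₀Equiv _ _).symm ⟨ModuleCat.ofHom (augmentation R ι), by
    rw [cartanComplex_d]
    exact ModuleCat.hom_ext (LinearMap.ext (augmentation_differential R ι))⟩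

theorem linearYonedaObj_cartanComplex_d (i j : ℕ) :
    ((cartanComplex R ι).linearYonedaObj R (augmentationObj R ι)).d i j = 0 := by
  by_cases hij : i + 1 = j
  · subst hij
    ext φ
    change (cartanComplex R ι).d (i + 1) i ≫ φ = 0
    rw [cartanComplex_d]
    exact ModuleCat.hom_ext (comp_differential_eq_zero φ.hom)
  · exact HomologicalComplex.shape _ _ _ hij

/-- A morphism from `Λ ⊗ Γⁿ` to the augmentation module is determined by its values on the divided
monomials. -/
def cartanHomEquiv (n : ℕ) :
    ((cartanComplex R ι).X n ⟶ augmentationObj R ι) ≃ₗ[R] (Sym ι n → R) where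
  __ := ModuleCat.homAddEquiv.trans ((Pi.basisFun Λ (Sym ι n)).constr ℕ).symm.toAddEquiv
  map_smul' c φ := by
    ext α
    exact congrArg (· * _) (ExteriorAlgebra.algebraMap_leftInverse (ι → R) c)

end Complex

section Resolution

variable [Fintype ι] [LinearOrder ι]

theorem exact_differential_augmentation :
    Function.Exact (differential R ι 0) (augmentation R ι) := by
  refine fun f => ⟨fun hf => ⟨homotopy f, ?_⟩, ?_⟩
  · ext β
    have : ExteriorAlgebra.algebraMapInv (f β) = 0 := Subsingleton.elim .nil β ▸ hf
    rw [differential_homotopy_zero, this, map_zero, sub_zero]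
  · rintro ⟨g, rfl⟩
    exact augmentation_differential R ι g

theorem exact_differential (n : ℕ) :
    Function.Exact (differential R ι (n + 1)) (differential R ι n) := by
  refine fun f => ⟨fun hf => ⟨homotopy f, ?_⟩, ?_⟩
  · have homotopy_zero : homotopy (0 : Sym ι n → Λ) = 0 := by
      ext α
      simp [homotopy]
    simpa [hf, homotopy_zero] using differential_homotopy_add_homotopy_differential f
  · rintro ⟨g, rfl⟩
    exact differential_differential n g

theorem cartanComplex_exactAt_succ (n : ℕ) : (cartanComplex R ι).ExactAt (n + 1) := by
  rw [HomologicalComplex.exactAt_iff' _ (n + 2) (n + 1) n (by simp) (by simp),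
    ShortComplex.ShortExact.moduleCat_exact_iff_function_exact]
  change Function.Exact ((cartanComplex R ι).d (n + 2) (n + 1)) ((cartanComplex R ι).d (n + 1) n)
  rw [cartanComplex_d, cartanComplex_d]
  exact exact_differential R ι n

theorem quasiIsoAt_cartanAugmentation_zero : QuasiIsoAt (cartanAugmentation R ι) 0 := by
  let S := ShortComplex.mk (ModuleCat.ofHom (differential R ι 0))
    (ModuleCat.ofHom (augmentation R ι))
    (ModuleCat.hom_ext (LinearMap.ext (augmentation_differential R ι)))
  have hS : S.Exact ∧ Epi S.g :=
    ⟨ShortComplex.ShortExact.moduleCat_exact_iff_function_exact S |>.2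
      (exact_differential_augmentation R ι),
      (ModuleCat.epi_iff_surjective _).2 (augmentation_surjective R ι)⟩
  rw [ChainComplex.quasiIsoAt₀_iff, ShortComplex.quasiIso_iff_of_zeros' _ rfl rfl rfl]
  refine (ShortComplex.exact_and_epi_g_iff_of_iso ?_).2 hS
  exact ShortComplex.isoMk (Iso.refl _) (Iso.refl _) (Iso.refl _)
    (by simpa using! (cartanComplex_d R ι 0).symm)
    ((Category.id_comp _).trans (Category.comp_id _).symm)

/-- The Cartan resolution of the augmentation module by the free modules `Λ ⊗ Γⁿ`. -/
def cartanResolution : ProjectiveResolution (augmentationObj R ι) where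
  complex := cartanComplex R ι
  projective n := (IsProjective.iff_projective _).1
    (inferInstanceAs (Module.Projective Λ (Sym ι n → Λ)))
  π := cartanAugmentation R ι
  quasiIso := ⟨fun n => by
    cases n with
    | zero => exact quasiIsoAt_cartanAugmentation_zero R ι
    | succ n =>
      rw [quasiIsoAt_iff_exactAt' _ _ (ChainComplex.exactAt_succ_single_obj _ _)]
      exact cartanComplex_exactAt_succ R ι n⟩

/-- `Extⁿ_Λ(R, R)` is the `R`-module of functions on the monomials of degree `n`. -/
def extEquiv (n : ℕ) :
    ((Ext R (ModuleCat.{u} Λ) n).obj (.op (augmentationObj R ι))).obj (augmentationObj R ι) ≃ₗ[R]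
      (Sym ι n → R) :=
  ((cartanResolution R ι).isoExt n (augmentationObj R ι) ≪≫
    (ShortComplex.HomologyData.ofZeros _ (linearYonedaObj_cartanComplex_d R ι _ _)
      (linearYonedaObj_cartanComplex_d R ι _ _)).left.homologyIso).toLinearEquiv ≪≫ₗ
    cartanHomEquiv R ι n

end Resolution

end AugmentationModule

end CartanResolution

theorem card_sym_fin {d : ℕ} (hd : 1 ≤ d) (n : ℕ) :
    Fintype.card (Sym (Fin d) n) = (n + d - 1).choose (d - 1) := by
  rw [Sym.card_sym_eq_choose, Fintype.card_fin, add_comm d n]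
  exact Nat.choose_symm_of_eq_add (by omega)

open scoped ModuleCat.Algebra in
open CartanResolution in
theorem finrank_ext_exteriorAlgebra_augmentation_general (R : Type*) [CommRing R] [Nontrivial R]
    {d : ℕ} (hd : 1 ≤ d) (n : ℕ) :
    let E := ((Ext R (ModuleCat (ExteriorAlgebra R (Fin d → R))) n).obj
      (.op (augmentationObj R (Fin d)))).obj (augmentationObj R (Fin d))
    Module.Free R E ∧ Module.Finite R E ∧
      Module.finrank R E = (n + d - 1).choose (d - 1) ∧ Nontrivial E := by
  intro E
  have e : E ≃ₗ[R] (Sym (Fin d) n → R) := extEquiv R (Fin d) n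
  have finrank_eq : Module.finrank R E = (n + d - 1).choose (d - 1) := by
    rw [e.finrank_eq, Module.finrank_fintype_fun_eq_card, card_sym_fin hd]
  refine ⟨.of_equiv e.symm, .equiv e.symm, finrank_eq, ?_⟩
  apply Module.nontrivial_of_finrank_pos (R := R)
  rw [finrank_eq]
  exact Nat.choose_pos (by omega)

/-- For `d ≥ 1`, `Ext^n_A(k, k)` for `A = Λ(k^d)` and `k` the augmentation module is a
`k`-vector space of dimension `(n + d - 1).choose (d - 1)`; in particular it is nonzero
for every `n ≥ 0`. -/
theorem finrank_ext_exteriorAlgebra_augmentation (hd : 1 ≤ d) (n : ℕ) :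
    FiniteDimensional k (((Ext k (ModuleCat (ExteriorAlgebra k (Fin d → k))) n).obj
        (Opposite.op (KModE k d))).obj (KModE k d)) ∧
    Module.finrank k (((Ext k (ModuleCat (ExteriorAlgebra k (Fin d → k))) n).obj
        (Opposite.op (KModE k d))).obj (KModE k d)) = (n + d - 1).choose (d - 1) ∧
    Nontrivial (((Ext k (ModuleCat (ExteriorAlgebra k (Fin d → k))) n).obj
        (Opposite.op (KModE k d))).obj (KModE k d)) := by
  -- `KModE k d` and the `k`-linear structure which instance search finds on its module category for
  -- a field unfold to `augmentationObj k (Fin d)` and `ModuleCat.Algebra.instLinear`.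
  exact (finrank_ext_exteriorAlgebra_augmentation_general k hd n).2

end
end

section
/- ($G_2$-invariance of the 4-colored propagator functions.) Let $z, w \in \mathbb{H}$ with $z \neq w$, $x \in \mathbb{R}$, $\lambda \in \mathbb{R}$ with $\lambda > 0$, and $\mu \in \mathbb{R}$. Then $\eta^{+,-}(\lambda z + \mu,\, \lambda w + \mu,\, \lambda x + \mu) = \eta^{+,-}(z,w,x)$ and $\eta^{-,+}(\lambda z + \mu,\, \lambda w + \mu,\, \lambda x + \mu) = \eta^{-,+}(z,w,x)$. (Hence the 4-colored propagators descend to the quotient configuration space $C_{2,1}$.) -/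
/-- The principal complex square root. -/
noncomputable def csqrt (z : ℂ) : ℂ := z ^ (1 / 2 : ℂ)

/-- Cattaneo–Felder's 4-colored propagator function `η^{+,-}`. -/
noncomputable def etaPM (z w : ℂ) (x : ℝ) : ℂ :=
  ((csqrt (z - x) - csqrt (w - x)) * (csqrt (z - x) + (starRingEnd ℂ) (csqrt (w - x)))) /
    ((csqrt (z - x) - (starRingEnd ℂ) (csqrt (w - x))) * (csqrt (z - x) + csqrt (w - x)))

/-- Cattaneo–Felder's 4-colored propagator function `η^{-,+}`. -/
noncomputable def etaMP (z w : ℂ) (x : ℝ) : ℂ :=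
  ((csqrt (z - x) - csqrt (w - x)) * (csqrt (z - x) - (starRingEnd ℂ) (csqrt (w - x)))) /
    ((csqrt (z - x) + (starRingEnd ℂ) (csqrt (w - x))) * (csqrt (z - x) + csqrt (w - x)))

/-! The arguments enter `η` only through differences such as `z - x`, which translations preserve
and a dilation by `λ` multiplies by `λ`. The principal square root then contributes a common factor
`√λ`, real and hence fixed by conjugation, and each `η` is homogeneous of degree `0` in the
square roots. -/

theorem ofReal_mul_cpow {r : ℝ} (hr : 0 ≤ r) (u s : ℂ) :
    ((r : ℂ) * u) ^ s = (r : ℂ) ^ s * u ^ s := by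
  obtain rfl | hs := eq_or_ne s 0
  · simp only [Complex.cpow_zero, mul_one]
  obtain rfl | hu := eq_or_ne u 0
  · simp only [Complex.zero_cpow hs, mul_zero]
  obtain rfl | hr := hr.eq_or_lt
  · simp only [Complex.ofReal_zero, Complex.zero_cpow hs, zero_mul]
  have hr₀ : (r : ℂ) ≠ 0 := Complex.ofReal_ne_zero.mpr hr.ne'
  rw [Complex.cpow_def_of_ne_zero (mul_ne_zero hr₀ hu), Complex.cpow_def_of_ne_zero hr₀,
    Complex.cpow_def_of_ne_zero hu, Complex.log_ofReal_mul hr hu, Complex.ofReal_log hr.le,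
    add_mul, Complex.exp_add]

theorem csqrt_ofReal {r : ℝ} (hr : 0 ≤ r) : csqrt r = √r := by
  rw [csqrt, Real.sqrt_eq_rpow, Complex.ofReal_cpow hr, Complex.ofReal_div, Complex.ofReal_one,
    Complex.ofReal_ofNat]

theorem csqrt_ofReal_mul {r : ℝ} (hr : 0 ≤ r) (u : ℂ) : csqrt (r * u) = √r * csqrt u := by
  rw [← csqrt_ofReal hr]
  exact ofReal_mul_cpow hr u (1 / 2)

theorem csqrt_ofReal_mul_sub {r : ℝ} (hr : 0 ≤ r) (u : ℂ) (x : ℝ) :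
    csqrt (r * u - (r * x : ℝ)) = √r * csqrt (u - x) := by
  rw [Complex.ofReal_mul, ← mul_sub, csqrt_ofReal_mul hr]

theorem sub_mul_add_div_sub_mul_add_mul_left {K : Type*} [Field K] {s : K} (hs : s ≠ 0)
    (a b c : K) :
    (s * a - s * b) * (s * a + s * c) / ((s * a - s * c) * (s * a + s * b)) =
      (a - b) * (a + c) / ((a - c) * (a + b)) := by
  simp only [← mul_sub, ← mul_add]
  rw [mul_mul_mul_comm, mul_mul_mul_comm s _ s, mul_div_mul_left _ _ (mul_ne_zero hs hs)]

theorem etaPM_add_ofReal (z w : ℂ) (x t : ℝ) : etaPM (z + t) (w + t) (x + t) = etaPM z w x := by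
  simp only [etaPM, Complex.ofReal_add, add_sub_add_right_eq_sub]

theorem etaMP_add_ofReal (z w : ℂ) (x t : ℝ) : etaMP (z + t) (w + t) (x + t) = etaMP z w x := by
  simp only [etaMP, Complex.ofReal_add, add_sub_add_right_eq_sub]

theorem etaPM_ofReal_mul {r : ℝ} (hr : 0 < r) (z w : ℂ) (x : ℝ) :
    etaPM (r * z) (r * w) (r * x) = etaPM z w x := by
  have sqrt_ne_zero : (√r : ℂ) ≠ 0 := Complex.ofReal_ne_zero.mpr (Real.sqrt_ne_zero'.mpr hr)
  simp only [etaPM, csqrt_ofReal_mul_sub hr.le, map_mul, Complex.conj_ofReal]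
  exact sub_mul_add_div_sub_mul_add_mul_left sqrt_ne_zero _ _ _

theorem etaMP_ofReal_mul {r : ℝ} (hr : 0 < r) (z w : ℂ) (x : ℝ) :
    etaMP (r * z) (r * w) (r * x) = etaMP z w x := by
  have sqrt_ne_zero : (√r : ℂ) ≠ 0 := Complex.ofReal_ne_zero.mpr (Real.sqrt_ne_zero'.mpr hr)
  simp only [etaMP, csqrt_ofReal_mul_sub hr.le, map_mul, Complex.conj_ofReal]
  -- `η^{-,+}` is `η^{+,-}` with the conjugated square root negated.
  simpa only [mul_neg, ← sub_eq_add_neg, sub_neg_eq_add] using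
    sub_mul_add_div_sub_mul_add_mul_left sqrt_ne_zero (csqrt (z - x)) (csqrt (w - x))
      (-(starRingEnd ℂ) (csqrt (w - x)))

theorem etaPM_etaMP_G2_invariant_general (z w : ℂ) (x : ℝ) {lam : ℝ} (hlam : 0 < lam) (mu : ℝ) :
    etaPM (lam * z + mu) (lam * w + mu) (lam * x + mu) = etaPM z w x ∧
      etaMP (lam * z + mu) (lam * w + mu) (lam * x + mu) = etaMP z w x := by
  rw [etaPM_add_ofReal, etaMP_add_ofReal]
  exact ⟨etaPM_ofReal_mul hlam z w x, etaMP_ofReal_mul hlam z w x⟩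

/-- `G₂`-invariance of the 4-colored propagator functions: they are invariant under the
simultaneous action `(z, w, x) ↦ (λz + μ, λw + μ, λx + μ)` for `λ > 0`, `μ ∈ ℝ`. -/
theorem etaPM_etaMP_G2_invariant
    (z w : ℂ) (hz : 0 < z.im) (hw : 0 < w.im) (hzw : z ≠ w)
    (x : ℝ) (lam : ℝ) (hlam : 0 < lam) (mu : ℝ) :
    etaPM ((lam : ℂ) * z + (mu : ℂ)) ((lam : ℂ) * w + (mu : ℂ)) (lam * x + mu) = etaPM z w x ∧
    etaMP ((lam : ℂ) * z + (mu : ℂ)) ((lam : ℂ) * w + (mu : ℂ)) (lam * x + mu) = etaMP z w x :=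
  etaPM_etaMP_G2_invariant_general z w x hlam mu
end

section
/- (Restriction of $\omega^{-,+}$ to the boundary stratum $\beta$ reproduces the 2-colored propagator $\omega^-$.) Let $\tilde{z}, \tilde{w} \in \mathbb{H}$ with $\tilde{z} \neq \tilde{w}$, and let $x, y \in \mathbb{R}$ with $y < x$. Then $\lim_{\varepsilon \to 0^+} \eta^{-,+}\big(y + \varepsilon \tilde{z},\; y + \varepsilon \tilde{w},\; x\big) = \dfrac{\tilde{w} - \tilde{z}}{\overline{\tilde{w}} - \tilde{z}}$, i.e. the limit is exactly the argument function of Kontsevich's propagator $\omega^-$, namely the function whose $\frac{1}{2\pi}\arg$ is $\varphi^-(\tilde z,\tilde w) = \varphi^+(\tilde w, \tilde z)$. -/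
/-!
Write `a = √(z - x)`, `b = √(w - x)`, `c = conj b`. Multiplying `(a - b) / (a + b)` by
`(a + b) / (a + b)` and `(a - c) / (a + c)` by `(a - c) / (a - c)` gives
`η^{-,+}(z, w, x) = (w - z) / (conj w - z) * ((a - c) / (a + b)) ^ 2`. When `z` and `w` tend to
`y < x` from the upper half-plane, `a` and `b` tend to the same nonzero imaginary number and `c` to
its negative, so the square tends to `1`. The remaining quotient is invariant under real affine
maps, hence constant along `(y + ε z̃, y + ε w̃)`.
-/

open Filter Topology ComplexConjugate

theorem sub_mul_sub_div_add_mul_add {K : Type*} [Field K] (a b c : K) :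
    (a - b) * (a - c) / ((a + c) * (a + b)) =
      (b ^ 2 - a ^ 2) / (c ^ 2 - a ^ 2) * ((a - c) / (a + b)) ^ 2 := by
  by_cases hab : a + b = 0
  · simp [hab]
  by_cases hac : a - c = 0
  · simp [hac]
  have h_b : (a - b) / (a + b) = (a ^ 2 - b ^ 2) / (a + b) ^ 2 := by
    rw [sq_sub_sq, sq, mul_div_mul_left _ _ hab]
  have h_c : (a - c) / (a + c) = (a - c) ^ 2 / (a ^ 2 - c ^ 2) := by
    rw [sq_sub_sq, sq, mul_comm (a + c), mul_div_mul_left _ _ hac]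
  calc (a - b) * (a - c) / ((a + c) * (a + b))
      = (a - b) / (a + b) * ((a - c) / (a + c)) := by
        rw [div_mul_div_comm, mul_comm (a + b)]
    _ = (a ^ 2 - b ^ 2) / (a ^ 2 - c ^ 2) * ((a - c) / (a + b)) ^ 2 := by
        rw [h_b, h_c, div_pow, div_mul_div_comm, div_mul_div_comm, mul_comm ((a + b) ^ 2)]
    _ = (b ^ 2 - a ^ 2) / (c ^ 2 - a ^ 2) * ((a - c) / (a + b)) ^ 2 := by
        rw [← neg_sub (b ^ 2), ← neg_sub (c ^ 2), neg_div_neg_eq]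

theorem sq_csqrt (z : ℂ) : csqrt z ^ 2 = z := by
  simp [csqrt]

theorem csqrt_ne_zero {z : ℂ} (hz : z ≠ 0) : csqrt z ≠ 0 := by
  simp [csqrt, Complex.cpow_eq_zero_iff, hz]

theorem csqrt_ofReal_of_nonpos {r : ℝ} (hr : r ≤ 0) : csqrt r = √(-r) * Complex.I := by
  have h_exp : Complex.exp (Real.pi * Complex.I * (1 / 2)) = Complex.I := by
    rw [mul_one_div, mul_div_right_comm, Complex.exp_pi_div_two_mul_I]
  have h_abs : (-r : ℂ) ^ (1 / 2 : ℂ) = √(-r) := by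
    rw [Real.sqrt_eq_rpow, Complex.ofReal_cpow (neg_nonneg.2 hr)]
    norm_num
  rw [csqrt, Complex.ofReal_cpow_of_nonpos hr, h_exp, h_abs]

theorem conj_csqrt_ofReal_of_nonpos {r : ℝ} (hr : r ≤ 0) :
    conj (csqrt r) = -csqrt r := by
  simp [csqrt_ofReal_of_nonpos hr]

theorem continuousOn_cpow_const_of_im_nonneg {s : ℂ} (hs : 0 < s.re) :
    ContinuousOn (fun z : ℂ => z ^ s) {z | 0 ≤ z.im} := by
  intro z _
  by_cases hz : 0 ≤ z.re ∨ z.im ≠ 0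
  · exact (Complex.continuousAt_cpow_const_of_re_pos hz hs).continuousWithinAt
  push Not at hz
  have hz_ne : z ≠ 0 := fun h => by simp [h] at hz
  -- On the negative axis the principal `log` is continuous from above, though not from below.
  have h_exp_log : ContinuousWithinAt (fun u : ℂ => Complex.exp (Complex.log u * s))
      {u | 0 ≤ u.im} z :=
    ((Complex.continuousWithinAt_log_of_re_neg_of_im_zero hz.1 hz.2).mul_const s).cexp
  refine h_exp_log.congr_of_eventuallyEq ?_ (Complex.cpow_def_of_ne_zero hz_ne s)
  filter_upwards [mem_nhdsWithin_of_mem_nhds (isOpen_ne.mem_nhds hz_ne)] with u hu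
  exact Complex.cpow_def_of_ne_zero hu s

theorem continuousOn_csqrt_sub_ofReal (x : ℝ) :
    ContinuousOn (fun z : ℂ => csqrt (z - x)) {z | 0 ≤ z.im} :=
  (continuousOn_cpow_const_of_im_nonneg (by norm_num)).comp (by fun_prop)
    fun z hz => by simpa using hz

/-- The function `η^-` on pairs of points, for which `arg η^-(z, w) / 2π` is Kontsevich's
2-colored angle `φ^-(z, w)`. -/
noncomputable def etaM (z w : ℂ) : ℂ :=
  (w - z) / (conj w - z)

theorem etaM_add_ofReal_mul (z w : ℂ) (y : ℝ) {ε : ℝ} (hε : ε ≠ 0) :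
    etaM (y + ε * z) (y + ε * w) = etaM z w := by
  simp only [etaM, map_add, map_mul, Complex.conj_ofReal, add_sub_add_left_eq_sub, ← mul_sub]
  exact mul_div_mul_left _ _ (Complex.ofReal_ne_zero.2 hε)

theorem tendsto_etaM_add_ofReal_mul (z w : ℂ) (y : ℝ) :
    Tendsto (fun ε : ℝ => etaM (y + ε * z) (y + ε * w)) (𝓝[≠] 0) (𝓝 (etaM z w)) :=
  tendsto_const_nhds.congr' <|
    eventually_mem_nhdsWithin.mono fun _ hε => (etaM_add_ofReal_mul z w y hε).symm

theorem etaMP_eq_etaM_mul (z w : ℂ) (x : ℝ) :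
    etaMP z w x = etaM z w *
      ((csqrt (z - x) - conj (csqrt (w - x))) / (csqrt (z - x) + csqrt (w - x))) ^ 2 := by
  have h_num : w - z = csqrt (w - x) ^ 2 - csqrt (z - x) ^ 2 := by simp [sq_csqrt]
  have h_den : conj w - z = conj (csqrt (w - x)) ^ 2 - csqrt (z - x) ^ 2 := by
    simp [← map_pow, sq_csqrt]
  rw [etaMP, etaM, h_num, h_den]
  exact sub_mul_sub_div_add_mul_add _ _ _

theorem tendsto_add_ofReal_mul_nhdsWithin_im_pos (y : ℝ) {z : ℂ} (hz : 0 < z.im) :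
    Tendsto (fun ε : ℝ => (y : ℂ) + ε * z) (𝓝[>] 0) (𝓝[{u : ℂ | 0 < u.im}] y) := by
  refine tendsto_nhdsWithin_iff.2 ⟨?_, ?_⟩
  · have h_cont : Continuous fun ε : ℝ => (y : ℂ) + ε * z := by fun_prop
    exact (h_cont.tendsto' 0 y (by simp)).mono_left nhdsWithin_le_nhds
  · filter_upwards [self_mem_nhdsWithin] with ε hε
    simpa using mul_pos hε hz

section Limits

variable {ι : Type*} {l : Filter ι} {z w : ι → ℂ} {x y : ℝ}

theorem tendsto_csqrt_sub_conj_div_add_sq (hxy : y < x)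
    (hz : Tendsto z l (𝓝[{u : ℂ | 0 ≤ u.im}] y)) (hw : Tendsto w l (𝓝[{u : ℂ | 0 ≤ u.im}] y)) :
    Tendsto (fun t => ((csqrt (z t - x) - conj (csqrt (w t - x))) /
      (csqrt (z t - x) + csqrt (w t - x))) ^ 2) l (𝓝 1) := by
  have h_cont := (continuousOn_csqrt_sub_ofReal x (y : ℂ) (by simp)).tendsto
  have h_conj : conj (csqrt (y - x)) = -csqrt (y - x) := by
    exact_mod_cast conj_csqrt_ofReal_of_nonpos (sub_nonpos.2 hxy.le)
  have h_sub_ne : (y : ℂ) - x ≠ 0 := sub_ne_zero.2 (Complex.ofReal_injective.ne hxy.ne)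
  have h_ne : csqrt (y - x) + csqrt (y - x) ≠ 0 :=
    add_self_eq_zero.not.2 (csqrt_ne_zero h_sub_ne)
  have h_a : Tendsto (fun t => csqrt (z t - x)) l (𝓝 (csqrt (y - x))) := h_cont.comp hz
  have h_b : Tendsto (fun t => csqrt (w t - x)) l (𝓝 (csqrt (y - x))) := h_cont.comp hw
  have h_c : Tendsto (fun t => conj (csqrt (w t - x))) l (𝓝 (-csqrt (y - x))) :=
    h_conj ▸ (Complex.continuous_conj.tendsto _).comp h_b
  have h_lim := ((h_a.sub h_c).div (h_a.add h_b) h_ne).pow 2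
  rw [sub_neg_eq_add, div_self h_ne, one_pow] at h_lim
  exact h_lim

theorem etaMP_tendsto_two_colored_propagator_on_beta_general {L : ℂ} (hxy : y < x)
    (hz : Tendsto z l (𝓝[{u : ℂ | 0 < u.im}] y)) (hw : Tendsto w l (𝓝[{u : ℂ | 0 < u.im}] y))
    (hL : Tendsto (fun t => etaM (z t) (w t)) l (𝓝 L)) :
    Tendsto (fun t => etaMP (z t) (w t) x) l (𝓝 L) := by
  have h_le : 𝓝[{u : ℂ | 0 < u.im}] (y : ℂ) ≤ 𝓝[{u | 0 ≤ u.im}] (y : ℂ) :=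
    nhdsWithin_mono _ (Set.ofPred_subset_ofPred.2 fun _ hu => hu.le)
  simpa only [etaMP_eq_etaM_mul, mul_one] using
    hL.mul (tendsto_csqrt_sub_conj_div_add_sq hxy (hz.mono_right h_le) (hw.mono_right h_le))

end Limits

/-- Restriction of `ω^{-,+}` to the boundary stratum `β` reproduces the 2-colored propagator
`ω^-`: for `z̃ ≠ w̃` in the open upper half-plane and reals `y < x`, as `ε → 0⁺`,
`η^{-,+}(y + ε z̃, y + ε w̃, x)` tends to `(w̃ - z̃)/(conj w̃ - z̃)`, the argument function of
Kontsevich's propagator `ω^-`. -/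
theorem etaMP_tendsto_two_colored_propagator_on_beta
    (zt wt : ℂ) (hz : 0 < zt.im) (hw : 0 < wt.im) (hne : zt ≠ wt)
    (x y : ℝ) (hxy : y < x) :
    Filter.Tendsto
      (fun ε : ℝ => etaMP ((y : ℂ) + (ε : ℂ) * zt) ((y : ℂ) + (ε : ℂ) * wt) x)
      (nhdsWithin 0 (Set.Ioi 0))
      (nhds ((wt - zt) / ((starRingEnd ℂ) wt - zt))) := by
  exact etaMP_tendsto_two_colored_propagator_on_beta_general hxy
    (tendsto_add_ofReal_mul_nhdsWithin_im_pos y hz) (tendsto_add_ofReal_mul_nhdsWithin_im_pos y hw)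
    ((tendsto_etaM_add_ofReal_mul zt wt y).mono_left (nhdsGT_le_nhdsNE 0))
end
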